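/- Zero-energy ground states of the torus square-lattice model exist at every rational filling between 1/5 and 1/4: for every rational number ρ with 1/5 ≤ ρ ≤ 1/4 there exist linearly independent u, v ∈ ℤ² (with every nonzero vector of Λ = ℤu + ℤv of Euclidean length at least 3) and a nonzero state ψ ∈ ker H of the hard-core fermion model on G_{u,v} which is an eigenvector of the number operator F (F|I⟩ = |I|·|I⟩) with eigenvalue F satisfying F / N = ρ, where N = |u₁v₂ − u₂v₁| is the number of vertices of G_{u,v}. -/

import Mathlib

/-! ### The supersymmetric hard-core fermion model on a graph

For a finite simple graph `G` with totally ordered vertex set, the Hilbert space has an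
orthonormal basis `{|I⟩ : I an independent set of G}`, the supercharge acts by
`Q|I⟩ = Σ_v ε(v,I) |I ∪ {v}⟩` (sum over `v ∉ I` with `I ∪ {v}` independent,
`ε(v,I) = (−1)^{#{w ∈ I : w < v}}`), and the Hamiltonian is `H = Q Q† + Q† Q`. -/

open scoped BigOperators

/-- A finite set of vertices is independent if it contains no edge of `G`. -/
def Indep {V : Type*} (G : SimpleGraph V) (I : Finset V) : Prop :=
  ∀ ⦃a⦄, a ∈ I → ∀ ⦃b⦄, b ∈ I → ¬ G.Adj a b

lemma Indep.mono {V : Type*} {G : SimpleGraph V} {I J : Finset V}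
    (hI : Indep G I) (hJI : J ⊆ I) : Indep G J :=
  fun _ ha _ hb => hI (hJI ha) (hJI hb)

/-- The independent sets of `G`, indexing the orthonormal basis of the Hilbert space. -/
def IndepSet {V : Type*} (G : SimpleGraph V) : Type _ := {I : Finset V // Indep G I}

noncomputable instance {V : Type*} [Fintype V] [LinearOrder V] (G : SimpleGraph V) :
    Fintype (IndepSet G) := by
  classical exact Subtype.fintype _

instance {V : Type*} [LinearOrder V] (G : SimpleGraph V) : DecidableEq (IndepSet G) := by
  unfold IndepSet; infer_instance

/-- The Hilbert space `ℋ_G` of the hard-core fermion model: one orthonormal basis state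
`|I⟩` for every independent set `I` of `G`. -/
noncomputable abbrev FockSpace {V : Type*} [Fintype V] [LinearOrder V] (G : SimpleGraph V) :=
  EuclideanSpace ℂ (IndepSet G)

/-- The fermionic sign `ε(v, I) = (−1)^{#{w ∈ I : w < v}}`. -/
def fsign {V : Type*} [LinearOrder V] (I : Finset V) (v : V) : ℂ :=
  (-1) ^ (I.filter (· < v)).card

/-- The supercharge `Q`, with `Q|I⟩ = Σ_v ε(v,I) |I ∪ {v}⟩` over vertices `v ∉ I` such that
`I ∪ {v}` is independent; equivalently `(Qψ)(J) = Σ_{v ∈ J} ε(v, J∖{v}) ψ(J∖{v})`. -/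
noncomputable def supercharge {V : Type*} [Fintype V] [LinearOrder V] (G : SimpleGraph V) :
    FockSpace G →ₗ[ℂ] FockSpace G where
  toFun ψ := WithLp.toLp 2 fun J : IndepSet G => ∑ v ∈ J.1, fsign (J.1.erase v) v *
      ψ ⟨J.1.erase v, J.2.mono (Finset.erase_subset v J.1)⟩
  map_add' ψ φ := by
    refine PiLp.ext fun J => ?_
    exact (Finset.sum_congr rfl fun v _ => mul_add (fsign (J.1.erase v) v)
      (ψ ⟨J.1.erase v, J.2.mono (Finset.erase_subset v J.1)⟩)
      (φ ⟨J.1.erase v, J.2.mono (Finset.erase_subset v J.1)⟩)).trans Finset.sum_add_distrib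
  map_smul' c ψ := by
    refine PiLp.ext fun J => ?_
    exact (Finset.sum_congr rfl fun v _ => mul_left_comm (fsign (J.1.erase v) v) c
      (ψ ⟨J.1.erase v, J.2.mono (Finset.erase_subset v J.1)⟩)).trans (Finset.mul_sum _ _ _).symm

/-- The Hamiltonian `H = Q Q† + Q† Q` of the supersymmetric hard-core fermion model. -/
noncomputable def hamiltonian {V : Type*} [Fintype V] [LinearOrder V] (G : SimpleGraph V) :
    FockSpace G →ₗ[ℂ] FockSpace G :=
  supercharge G ∘ₗ LinearMap.adjoint (supercharge G)
    + LinearMap.adjoint (supercharge G) ∘ₗ supercharge G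

/-- The fermion-number operator `F`, with `F|I⟩ = |I| · |I⟩`. -/
noncomputable def numberOp {V : Type*} [Fintype V] [LinearOrder V] (G : SimpleGraph V) :
    FockSpace G →ₗ[ℂ] FockSpace G where
  toFun ψ := WithLp.toLp 2 fun I : IndepSet G => (I.1.card : ℂ) * ψ I
  map_add' ψ φ := by refine PiLp.ext fun I => ?_; simp [mul_add]
  map_smul' c ψ := by refine PiLp.ext fun I => ?_; simp [mul_left_comm]

/-- The bosonic subspace: the span of the basis states `|I⟩` with `|I|` even. -/
noncomputable def bosonic {V : Type*} [Fintype V] [LinearOrder V] (G : SimpleGraph V) :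
    Submodule ℂ (FockSpace G) :=
  Submodule.span ℂ
    {e : FockSpace G | ∃ I : IndepSet G, Even I.1.card ∧ e = EuclideanSpace.single I 1}

/-- The fermionic subspace: the span of the basis states `|I⟩` with `|I|` odd. -/
noncomputable def fermionic {V : Type*} [Fintype V] [LinearOrder V] (G : SimpleGraph V) :
    Submodule ℂ (FockSpace G) :=
  Submodule.span ℂ
    {e : FockSpace G | ∃ I : IndepSet G, Odd I.1.card ∧ e = EuclideanSpace.single I 1}

/-! ### The torus square lattice and Jonsson's rhombus tilings -/

/-- The lattice `Λ = ℤu + ℤv ⊆ ℤ²`. -/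
def lat (u v : ℤ × ℤ) : AddSubgroup (ℤ × ℤ) := AddSubgroup.closure {u, v}

/-- The torus square-lattice graph `G_{u,v}` on `ℤ²/Λ`: two distinct classes are adjacent
whenever they have representatives differing by `(1,0)` or `(0,1)`. -/
def torusGraph (u v : ℤ × ℤ) : SimpleGraph ((ℤ × ℤ) ⧸ lat u v) where
  Adj a b := a ≠ b ∧
    (a - b = ((1, 0) : ℤ × ℤ) ∨ b - a = ((1, 0) : ℤ × ℤ) ∨
     a - b = ((0, 1) : ℤ × ℤ) ∨ b - a = ((0, 1) : ℤ × ℤ))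
  symm := by
    constructor
    rintro a b ⟨hne, h⟩
    exact ⟨hne.symm, by tauto⟩
  loopless := ⟨fun a h => h.1 rfl⟩

/-- A rhombus placed in the plane: a corner in `ℤ²` together with one of the four Jonsson
rhombus kinds. -/
structure PlacedRhombus where
  corner : ℤ × ℤ
  kind : Fin 4

/-- First edge vectors of the four Jonsson rhombi. -/
def edgeVec1 : Fin 4 → ℤ × ℤ := ![(1, 2), (2, 1), (1, 2), (2, 1)]

/-- Second edge vectors of the four Jonsson rhombi. -/
def edgeVec2 : Fin 4 → ℤ × ℤ := ![(-1, 2), (2, -1), (2, -1), (-1, 2)]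

/-- Embedding of `ℤ²` into `ℝ²`. -/
def toR (p : ℤ × ℤ) : ℝ × ℝ := ((p.1 : ℝ), (p.2 : ℝ))

/-- The closed parallelogram covered by a placed rhombus. -/
def closedCell (r : PlacedRhombus) : Set (ℝ × ℝ) :=
  {x | ∃ s t : ℝ, 0 ≤ s ∧ s ≤ 1 ∧ 0 ≤ t ∧ t ≤ 1 ∧
    x = toR r.corner + s • toR (edgeVec1 r.kind) + t • toR (edgeVec2 r.kind)}

/-- The open parallelogram (interior) covered by a placed rhombus. -/
def openCell (r : PlacedRhombus) : Set (ℝ × ℝ) :=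
  {x | ∃ s t : ℝ, 0 < s ∧ s < 1 ∧ 0 < t ∧ t < 1 ∧
    x = toR r.corner + s • toR (edgeVec1 r.kind) + t • toR (edgeVec2 r.kind)}

/-- Translation of a placed rhombus by a lattice vector. -/
def rTranslate (w : ℤ × ℤ) (r : PlacedRhombus) : PlacedRhombus :=
  ⟨r.corner + w, r.kind⟩

/-- A rhombus tiling of the torus `ℝ²/Λ`: a `Λ`-invariant family of Jonsson rhombi with
pairwise disjoint interiors whose union is all of `ℝ²`. -/
def IsTiling (Λ : AddSubgroup (ℤ × ℤ)) (T : Set PlacedRhombus) : Prop :=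
  (∀ w ∈ Λ, ∀ r ∈ T, rTranslate w r ∈ T) ∧
  (∀ r ∈ T, ∀ r' ∈ T, r ≠ r' → openCell r ∩ openCell r' = ∅) ∧
  (⋃ r ∈ T, closedCell r) = Set.univ

/-- The number of tiles of a tiling, counted modulo `Λ`. -/
noncomputable def numTiles (Λ : AddSubgroup (ℤ × ℤ)) (T : Set PlacedRhombus) : ℕ :=
  Nat.card (Quot (fun r r' : T => ∃ w ∈ Λ, rTranslate w (r' : PlacedRhombus) = r))

/-- `t_b`: the number of rhombus tilings of the torus `ℝ²/Λ` with an even number of tiles. -/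
noncomputable def evenTilings (Λ : AddSubgroup (ℤ × ℤ)) : ℕ :=
  Nat.card {T : Set PlacedRhombus // IsTiling Λ T ∧ Even (numTiles Λ T)}

/-- `t_f`: the number of rhombus tilings of the torus `ℝ²/Λ` with an odd number of tiles. -/
noncomputable def oddTilings (Λ : AddSubgroup (ℤ × ℤ)) : ℕ :=
  Nat.card {T : Set PlacedRhombus // IsTiling Λ T ∧ Odd (numTiles Λ T)}

/-- `θ_k = 2` if `3 ∣ k`, and `θ_k = −1` otherwise. -/
def theta (k : ℤ) : ℤ := if (3 : ℤ) ∣ k then 2 else -1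

/-- There is a nonzero zero-energy ground state of the hard-core fermion model on
`G_{u,v}` which is an eigenvector of the number operator `F` with eigenvalue `k`
satisfying `k / N = ρ`, where `N = |u₁v₂ − u₂v₁|` is the number of vertices. -/
def HasGroundStateAtFilling (u v : ℤ × ℤ) (fin : Fintype ((ℤ × ℤ) ⧸ lat u v))
    (lo : LinearOrder ((ℤ × ℤ) ⧸ lat u v)) (ρ : ℚ) : Prop :=
  letI := fin
  letI := lo
  ∃ ψ : FockSpace (torusGraph u v), ψ ≠ 0 ∧
    ψ ∈ LinearMap.ker (hamiltonian (torusGraph u v)) ∧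
    ∃ k : ℕ, numberOp (torusGraph u v) ψ = (k : ℂ) • ψ ∧
      (k : ℚ) / ((u.1 * v.2 - u.2 * v.1).natAbs : ℚ) = ρ

/-!
The supercharge `Q` squares to zero, so a `Q`-closed state that is not `Q`-exact has a nonzero
component orthogonal to the range of `Q`, and this component lies in `ker H`. Since the number
operator is symmetric and preserves the range of `Q`, the component keeps the particle number.

A basis state `|A⟩` with `A` a maximal independent set is closed. It is not exact as soon as `A` is
a transversal of an induced matching: the transversals are the facets of a cross-polytope in the
independence complex, and pairing with its fundamental cycle kills exact states but not `|A⟩`.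

For `ρ = p / q` in lowest terms, give the site `(x, y)` the phase `p (2x + y)` modulo `q`, and let
`A` be the set of sites with phase in `[0, p)`. As steps to the right and up add `2p` and `p` to the
phase, `4p ≤ q` makes the vertical edges above the sites of `A` an induced matching, while `q ≤ 5p`
makes `A` maximal. The phase is equidistributed, so `A` has density `p / q`.
-/

/-! ### Fermionic signs -/

section Sign

lemma prod_sign_update_not {ι : Type*} [Fintype ι] [DecidableEq ι] (T : ι → Bool) (i : ι) :
    (∏ j, if Function.update T i (!T i) j then (-1 : ℂ) else 1) = -∏ j, if T j then -1 else 1 := by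
  rw [Fintype.prod_eq_mul_prod_compl i,
    Fintype.prod_eq_mul_prod_compl i (fun j => if T j then _ else _), ← neg_mul,
    Function.update_self]
  congr 1
  · cases T i <;> simp
  · refine Finset.prod_congr rfl fun j hj => ?_
    rw [Function.update_of_ne (by simpa using hj)]

variable {V : Type*} [LinearOrder V]

lemma fsign_eq_prod (I : Finset V) (v : V) :
    fsign I v = ∏ w ∈ I, if w < v then -1 else 1 := by
  simp [fsign, Finset.prod_ite]

lemma fsign_eq_mul_fsign_erase {I : Finset V} {w : V} (hw : w ∈ I) (v : V) :
    fsign I v = (if w < v then -1 else 1) * fsign (I.erase w) v := by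
  rw [fsign_eq_prod, fsign_eq_prod, Finset.mul_prod_erase I (fun w => if w < v then -1 else 1) hw]

lemma fsign_erase_mul_fsign_erase_erase {J : Finset V} {v w : V} (hv : v ∈ J) (hw : w ∈ J)
    (hvw : v ≠ w) :
    fsign (J.erase v) v * fsign ((J.erase v).erase w) w =
      -(fsign (J.erase w) w * fsign ((J.erase w).erase v) v) := by
  rw [fsign_eq_mul_fsign_erase (Finset.mem_erase.2 ⟨hvw.symm, hw⟩) v,
    fsign_eq_mul_fsign_erase (Finset.mem_erase.2 ⟨hvw, hv⟩) w, Finset.erase_right_comm]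
  rcases hvw.lt_or_gt with h | h
  · rw [if_pos h, if_neg h.not_gt]; ring
  · rw [if_pos h, if_neg h.not_gt]; ring

variable {ι : Type*} [Fintype ι] [LinearOrder ι]

/-- The sign `(-1)^{#inversions}` of a tuple `x : ι → V`: the sign of the permutation that sorts
an injective `x`. It makes signed amplitudes independent of the order chosen on `V`. -/
noncomputable def inversionSign (x : ι → V) : ℂ :=
  ∏ j, ∏ k, if j < k ∧ x k < x j then -1 else 1

lemma inversionSign_ne_zero (x : ι → V) : inversionSign x ≠ 0 :=
  Finset.prod_ne_zero_iff.2 fun _ _ => Finset.prod_ne_zero_iff.2 fun _ _ => by split_ifs <;> simp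

lemma fsign_image_compl {x : ι → V} (hx : Function.Injective x) (i : ι) :
    fsign (({i}ᶜ : Finset ι).image x) (x i) = ∏ j ∈ {i}ᶜ, if x j < x i then -1 else 1 := by
  rw [fsign_eq_prod, Finset.prod_image hx.injOn]

lemma inversionSign_mul_fsign {x : ι → V} (hx : Function.Injective x) (i : ι) :
    inversionSign x * fsign (({i}ᶜ : Finset ι).image x) (x i) =
      (∏ j ∈ {i}ᶜ, if i < j then 1 else -1) *
        ∏ j ∈ {i}ᶜ, ∏ k ∈ {i}ᶜ, if j < k ∧ x k < x j then -1 else 1 := by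
  have pair_sign : ∀ j ∈ ({i}ᶜ : Finset ι), (if i < j then (1 : ℂ) else -1) =
      (if i < j ∧ x j < x i then -1 else 1) * (if j < i ∧ x i < x j then -1 else 1) *
        (if x j < x i then -1 else 1) := by
    intro j hj
    have hji : j ≠ i := by simpa using hj
    rcases hji.lt_or_gt with h | h <;> rcases (hx.ne hji).lt_or_gt with h' | h' <;>
      simp [h, h', h.not_gt, h'.not_gt]
  rw [fsign_image_compl hx, Finset.prod_congr rfl pair_sign, inversionSign,
    Fintype.prod_eq_mul_prod_compl i]
  simp_rw [Fintype.prod_eq_mul_prod_compl i (fun k => if _ < k ∧ x k < x _ then (-1 : ℂ) else 1)]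
  simp only [lt_self_iff_false, false_and, if_false, one_mul, Finset.prod_mul_distrib]
  ring

lemma inversionSign_mul_fsign_congr {x y : ι → V} (hx : Function.Injective x)
    (hy : Function.Injective y) {i : ι} (hxy : ∀ j ≠ i, x j = y j) :
    inversionSign x * fsign (({i}ᶜ : Finset ι).image x) (x i) =
      inversionSign y * fsign (({i}ᶜ : Finset ι).image y) (y i) := by
  rw [inversionSign_mul_fsign hx, inversionSign_mul_fsign hy]
  congr 1
  refine Finset.prod_congr rfl fun j hj => Finset.prod_congr rfl fun k hk => ?_
  rw [hxy j (by simpa using hj), hxy k (by simpa using hk)]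

end Sign

/-! ### Ground states from cohomology -/

section Model

variable {V : Type*} [LinearOrder V] {G : SimpleGraph V}

/-- The independent set obtained by removing a vertex (if present). -/
def IndepSet.erase (J : IndepSet G) (v : V) : IndepSet G :=
  ⟨J.1.erase v, J.2.mono (Finset.erase_subset v J.1)⟩

@[simp]
lemma IndepSet.coe_erase (J : IndepSet G) (v : V) : (J.erase v).1 = J.1.erase v := rfl

lemma IndepSet.erase_right_comm (J : IndepSet G) (v w : V) :
    (J.erase v).erase w = (J.erase w).erase v :=
  Subtype.ext Finset.erase_right_comm

variable [Fintype V]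

lemma supercharge_apply (ψ : FockSpace G) (J : IndepSet G) :
    supercharge G ψ J = ∑ v ∈ J.1, fsign (J.1.erase v) v * ψ (J.erase v) := rfl

lemma numberOp_apply (ψ : FockSpace G) (I : IndepSet G) :
    numberOp G ψ I = (I.1.card : ℂ) * ψ I := rfl

lemma supercharge_supercharge (ψ : FockSpace G) : supercharge G (supercharge G ψ) = 0 := by
  refine PiLp.ext fun J => ?_
  simp_rw [supercharge_apply, Finset.mul_sum]
  rw [Finset.sum_sigma']
  refine Finset.sum_involution (fun p _ => ⟨p.2, p.1⟩) ?_ ?_ ?_ fun _ _ => rfl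
  · rintro ⟨v, w⟩ hp
    obtain ⟨hv, hwv, hw⟩ : v ∈ J.1 ∧ w ≠ v ∧ w ∈ J.1 := by simpa using hp
    have hsign := fsign_erase_mul_fsign_erase_erase hv hw hwv.symm
    simp only [IndepSet.coe_erase, J.erase_right_comm v w]
    linear_combination ψ ((J.erase w).erase v) * hsign
  · rintro ⟨v, w⟩ hp - heq
    have hwv : w ≠ v := (by simpa using hp : v ∈ J.1 ∧ w ≠ v ∧ w ∈ J.1).2.1
    exact hwv (congrArg Sigma.fst heq)
  · rintro ⟨v, w⟩ hp
    obtain ⟨hv, hwv, hw⟩ : v ∈ J.1 ∧ w ≠ v ∧ w ∈ J.1 := by simpa using hp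
    simpa using ⟨hw, hwv.symm, hv⟩

lemma numberOp_supercharge (ψ : FockSpace G) :
    numberOp G (supercharge G ψ) = supercharge G (numberOp G ψ + ψ) := by
  refine PiLp.ext fun J => ?_
  rw [numberOp_apply, supercharge_apply, supercharge_apply, Finset.mul_sum]
  refine Finset.sum_congr rfl fun v hv => ?_
  have hcard : (J.1.card : ℂ) = (J.erase v).1.card + 1 := by
    exact_mod_cast (Finset.card_erase_add_one hv).symm
  rw [PiLp.add_apply, numberOp_apply, hcard]
  ring

lemma numberOp_isSymmetric : (numberOp G).IsSymmetric := by
  intro ψ φ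
  simp_rw [PiLp.inner_apply, numberOp_apply]
  refine Finset.sum_congr rfl fun I _ => ?_
  simp [mul_left_comm, mul_assoc]

lemma numberOp_mem_range_supercharge {ψ : FockSpace G}
    (hψ : ψ ∈ LinearMap.range (supercharge G)) :
    numberOp G ψ ∈ LinearMap.range (supercharge G) := by
  obtain ⟨χ, rfl⟩ := hψ
  exact ⟨_, (numberOp_supercharge χ).symm⟩

lemma numberOp_mem_orthogonal_range_supercharge {ψ : FockSpace G}
    (hψ : ψ ∈ (LinearMap.range (supercharge G))ᗮ) :
    numberOp G ψ ∈ (LinearMap.range (supercharge G))ᗮ := by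
  intro χ hχ
  rw [← numberOp_isSymmetric]
  exact hψ _ (numberOp_mem_range_supercharge hχ)

lemma mem_ker_hamiltonian {ψ : FockSpace G} (hQ : supercharge G ψ = 0)
    (hQ' : LinearMap.adjoint (supercharge G) ψ = 0) : ψ ∈ LinearMap.ker (hamiltonian G) := by
  simp [hamiltonian, hQ, hQ']

theorem exists_ground_state_of_closed_not_exact {φ : FockSpace G} {n : ℂ}
    (hclosed : supercharge G φ = 0) (hnumber : numberOp G φ = n • φ)
    (hexact : φ ∉ LinearMap.range (supercharge G)) :
    ∃ ψ : FockSpace G, ψ ≠ 0 ∧ ψ ∈ LinearMap.ker (hamiltonian G) ∧ numberOp G ψ = n • ψ := by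
  obtain ⟨χ, hχ, ψ, hψ, rfl⟩ :=
    Submodule.exists_add_mem_mem_orthogonal (K := LinearMap.range (supercharge G)) φ
  have hQχ : supercharge G χ = 0 := by
    obtain ⟨η, rfl⟩ := hχ
    exact supercharge_supercharge η
  have hQψ : supercharge G ψ = 0 := by rwa [map_add, hQχ, zero_add] at hclosed
  have hQ'ψ : LinearMap.adjoint (supercharge G) ψ = 0 := by
    rwa [LinearMap.orthogonal_range, LinearMap.mem_ker] at hψ
  refine ⟨ψ, ?_, mem_ker_hamiltonian hQψ hQ'ψ, ?_⟩
  · rintro rfl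
    exact hexact (by rwa [add_zero])
  have hcomponents : numberOp G ψ - n • ψ = -(numberOp G χ - n • χ) := by
    rw [map_add, smul_add] at hnumber
    rw [sub_eq_iff_eq_add, neg_sub, ← add_sub_right_comm, ← hnumber, add_sub_cancel_left]
  have hmem : numberOp G ψ - n • ψ ∈ LinearMap.range (supercharge G) := by
    rw [hcomponents]
    exact neg_mem (sub_mem (numberOp_mem_range_supercharge hχ) (Submodule.smul_mem _ n hχ))
  have hmem' : numberOp G ψ - n • ψ ∈ (LinearMap.range (supercharge G))ᗮ :=
    sub_mem (numberOp_mem_orthogonal_range_supercharge hψ) (Submodule.smul_mem _ n hψ)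
  exact sub_eq_zero.1 ((Submodule.disjoint_def.1 (Submodule.orthogonal_disjoint _)) _ hmem hmem')

lemma numberOp_single (I : IndepSet G) :
    numberOp G (EuclideanSpace.single I 1) = (I.1.card : ℂ) • EuclideanSpace.single I 1 := by
  refine PiLp.ext fun J => ?_
  rw [numberOp_apply, PiLp.smul_apply, smul_eq_mul]
  by_cases h : J = I
  · rw [h]
  · simp [h]

lemma supercharge_single_of_maximal {I : IndepSet G} (hI : Maximal (Indep G) I.1) :
    supercharge G (EuclideanSpace.single I 1) = 0 := by
  refine PiLp.ext fun J => ?_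
  rw [supercharge_apply]
  refine Finset.sum_eq_zero fun v hv => ?_
  have hne : J.erase v ≠ I := by
    rintro rfl
    exact Finset.notMem_erase v J.1 (hI.2 J.2 (Finset.erase_subset v J.1) hv)
  simp [hne]

end Model

/-! ### Induced matchings -/

/-- An induced matching of `G`: the edges `{e i false, e i true}` are pairwise disjoint and `G` has
no further edge between their endpoints. Disjointness is automatic. -/
def IsInducedMatching {V ι : Type*} (G : SimpleGraph V) (e : ι → Bool → V) : Prop :=
  ∀ i j s t, G.Adj (e i s) (e j t) ↔ i = j ∧ s ≠ t

namespace IsInducedMatching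

section

variable {V ι : Type*} {G : SimpleGraph V} {e : ι → Bool → V}

lemma eq_and_eq (he : IsInducedMatching G e) {i j : ι} {s t : Bool} (h : e i s = e j t) :
    i = j ∧ s = t := by
  have hadj : G.Adj (e i s) (e i !s) := (he _ _ _ _).2 ⟨rfl, by simp⟩
  rw [h, he] at hadj
  exact ⟨hadj.1.symm, by simpa using hadj.2.symm⟩

lemma injective (he : IsInducedMatching G e) (T : ι → Bool) :
    Function.Injective fun i => e i (T i) :=
  fun _ _ h => (he.eq_and_eq h).1

end

variable {V ι : Type*} [LinearOrder V] [Fintype ι] {G : SimpleGraph V} {e : ι → Bool → V}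

/-- The independent set picking the endpoint `e i (T i)` from each edge of an induced matching.
These are the facets of a cross-polytope in the independence complex of `G`. -/
def facet (he : IsInducedMatching G e) (T : ι → Bool) : IndepSet G :=
  ⟨Finset.univ.image fun i => e i (T i), by
    simp only [Indep, Finset.mem_image, Finset.mem_univ, true_and]
    rintro _ ⟨i, rfl⟩ _ ⟨j, rfl⟩ h
    obtain ⟨rfl, hne⟩ := (he _ _ _ _).1 h
    exact hne rfl⟩

lemma facet_injective (he : IsInducedMatching G e) : Function.Injective he.facet := by
  intro T T' h
  funext i
  have hmem : e i (T i) ∈ (he.facet T').1 := h ▸ Finset.mem_image_of_mem _ (Finset.mem_univ i)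
  obtain ⟨j, -, hj⟩ := Finset.mem_image.1 hmem
  obtain ⟨rfl, hT⟩ := he.eq_and_eq hj
  exact hT.symm

lemma card_facet (he : IsInducedMatching G e) (T : ι → Bool) :
    (he.facet T).1.card = Fintype.card ι :=
  Finset.card_image_of_injective _ (he.injective T)

lemma coe_facet_erase [DecidableEq ι] (he : IsInducedMatching G e) (T : ι → Bool) (i : ι) :
    ((he.facet T).erase (e i (T i))).1 = ({i}ᶜ : Finset ι).image fun j => e j (T j) := by
  rw [Finset.compl_singleton, Finset.image_erase (he.injective T)]
  rfl

lemma facet_erase_congr (he : IsInducedMatching G e) {T T' : ι → Bool} {i : ι}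
    (hT : ∀ j ≠ i, T j = T' j) :
    (he.facet T).erase (e i (T i)) = (he.facet T').erase (e i (T' i)) := by
  classical
  refine Subtype.ext ?_
  rw [coe_facet_erase, coe_facet_erase]
  exact Finset.image_congr fun j hj => by simp only [hT j (by simpa using hj)]

variable [Fintype V]

lemma supercharge_apply_facet [DecidableEq ι] (he : IsInducedMatching G e) (ψ : FockSpace G)
    (T : ι → Bool) :
    supercharge G ψ (he.facet T) =
      ∑ i, fsign (({i}ᶜ : Finset ι).image fun j => e j (T j)) (e i (T i)) *
        ψ ((he.facet T).erase (e i (T i))) := by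
  rw [supercharge_apply]
  refine (Finset.sum_image (he.injective T).injOn).trans (Finset.sum_congr rfl fun i _ => ?_)
  rw [← he.coe_facet_erase, IndepSet.coe_erase]

/-- The pairing of a state with the fundamental cycle of the cross-polytope spanned by an induced
matching. -/
noncomputable def crossCyclePairing [LinearOrder ι] (he : IsInducedMatching G e)
    (ψ : FockSpace G) : ℂ :=
  ∑ T : ι → Bool, (∏ i, if T i then -1 else 1) * inversionSign (fun i => e i (T i)) *
    ψ (he.facet T)

lemma crossCyclePairing_supercharge [LinearOrder ι] (he : IsInducedMatching G e)
    (ψ : FockSpace G) : he.crossCyclePairing (supercharge G ψ) = 0 := by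
  simp_rw [crossCyclePairing, he.supercharge_apply_facet, Finset.mul_sum]
  rw [Finset.sum_comm]
  refine Finset.sum_eq_zero fun i _ => ?_
  refine Finset.sum_involution (fun T _ => Function.update T i (!T i)) (fun T _ => ?_)
    (fun T _ _ h => ?_) (fun _ _ => Finset.mem_univ _) (fun T _ => by simp)
  · have hT : ∀ j ≠ i, Function.update T i (!T i) j = T j :=
      fun j hj => Function.update_of_ne hj _ _
    have hsign := inversionSign_mul_fsign_congr (he.injective _) (he.injective T)
      (i := i) fun j hj => congrArg (e j) (hT j hj)
    rw [prod_sign_update_not, he.facet_erase_congr hT]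
    linear_combination (-(∏ j, if T j then (-1 : ℂ) else 1) *
      ψ ((he.facet T).erase (e i (T i)))) * hsign
  · simpa using congrFun h i

lemma crossCyclePairing_single_ne_zero [LinearOrder ι] (he : IsInducedMatching G e)
    (T : ι → Bool) : he.crossCyclePairing (EuclideanSpace.single (he.facet T) 1) ≠ 0 := by
  rw [crossCyclePairing, Finset.sum_eq_single T]
  · simp only [PiLp.single_apply, if_true, mul_one]
    refine mul_ne_zero (Finset.prod_ne_zero_iff.2 fun i _ => ?_) (inversionSign_ne_zero _)
    split_ifs <;> simp
  · intro T' _ hT'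
    simp [he.facet_injective.ne hT']
  · simp

lemma single_facet_notMem_range_supercharge (he : IsInducedMatching G e) (T : ι → Bool) :
    EuclideanSpace.single (he.facet T) 1 ∉ LinearMap.range (supercharge G) := by
  rintro ⟨χ, hχ⟩
  let : LinearOrder ι := LinearOrder.lift' (fun i => e i (T i)) (he.injective T)
  exact he.crossCyclePairing_single_ne_zero T (hχ ▸ he.crossCyclePairing_supercharge χ)

theorem exists_ground_state_of_maximal_facet (he : IsInducedMatching G e) {T : ι → Bool}
    (hmax : Maximal (Indep G) (he.facet T).1) :
    ∃ ψ : FockSpace G, ψ ≠ 0 ∧ ψ ∈ LinearMap.ker (hamiltonian G) ∧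
      numberOp G ψ = (Fintype.card ι : ℂ) • ψ :=
  exists_ground_state_of_closed_not_exact (supercharge_single_of_maximal hmax)
    (he.card_facet T ▸ numberOp_single _) (he.single_facet_notMem_range_supercharge T)

end IsInducedMatching

lemma maximal_indep_of_forall_exists_adj {V : Type*} {G : SimpleGraph V} {I : Finset V}
    (hI : Indep G I) (hdom : ∀ v, v ∈ I ∨ ∃ w ∈ I, G.Adj v w) : Maximal (Indep G) I := by
  refine ⟨hI, fun J hJ hIJ v hv => (hdom v).resolve_right ?_⟩
  rintro ⟨w, hw, hvw⟩
  exact hJ hv (hIJ hw) hvw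

/-! ### Counting sites of the torus -/

section Counting

lemma natCard_quotient_lat {u v : ℤ × ℤ} (hdet : u.1 * v.2 - u.2 * v.1 ≠ 0) :
    Nat.card ((ℤ × ℤ) ⧸ lat u v) = (u.1 * v.2 - u.2 * v.1).natAbs := by
  have hlin : LinearIndependent ℤ ![u, v] := by
    refine LinearIndependent.pair_iff.2 fun s t h => ?_
    obtain ⟨h1, h2⟩ : s * u.1 + t * v.1 = 0 ∧ s * u.2 + t * v.2 = 0 := by
      simpa [Prod.ext_iff] using h
    constructor
    · exact (mul_eq_zero.1 (by linear_combination v.2 * h1 - v.1 * h2)).resolve_right hdet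
    · exact (mul_eq_zero.1 (by linear_combination u.1 * h2 - u.2 * h1)).resolve_right hdet
  have hspan : (Submodule.span ℤ (Set.range ![u, v])).toAddSubgroup = lat u v := by
    rw [Submodule.span_int_eq_addSubgroupClosure, Matrix.range_cons_cons_empty, lat]
  have hbasis : ((↑) ∘ Module.Basis.span hlin : Fin 2 → ℤ × ℤ) = ![u, v] := by
    ext1 i
    exact congrArg Subtype.val (Module.Basis.span_apply hlin i)
  have hcard := Submodule.natAbs_det_basis_change (Module.Basis.finTwoProd ℤ) _
    (Module.Basis.span hlin)
  rw [hbasis] at hcard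
  rw [← hspan]
  refine hcard.symm.trans (congrArg Int.natAbs ?_)
  simp [Module.Basis.det_apply, Module.Basis.toMatrix_apply, Matrix.det_fin_two, mul_comm]

lemma finite_quotient_lat {u v : ℤ × ℤ} (hdet : u.1 * v.2 - u.2 * v.1 ≠ 0) :
    Finite ((ℤ × ℤ) ⧸ lat u v) :=
  Nat.finite_of_card_ne_zero (natCard_quotient_lat hdet ▸ Int.natAbs_ne_zero.2 hdet)

lemma card_filter_mem_mul_card {A B : Type*} [AddGroup A] [AddGroup B] [Fintype A] [Fintype B]
    [DecidableEq B] {φ : A →+ B} (hφ : Function.Surjective φ) (S : Finset B) :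
    (Finset.univ.filter fun a => φ a ∈ S).card * Fintype.card B = S.card * Fintype.card A := by
  have hfiber (T : Finset B) : (Finset.univ.filter fun a => φ a ∈ T).card =
      T.card * (Finset.univ.filter fun a => φ a = 0).card := by
    rw [Finset.card_eq_sum_card_fiberwise (f := φ) (t := T) (fun a ha => by simpa using ha),
      ← smul_eq_mul, ← Finset.sum_const]
    refine Finset.sum_congr rfl fun b hb => ?_
    rw [← AddMonoidHom.card_fiber_eq_of_mem_range φ (hφ b) (hφ 0)]
    congr 1
    ext a
    simp +contextual [hb]
  have huniv := hfiber Finset.univ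
  simp only [Finset.mem_univ, Finset.filter_true, Finset.card_univ] at huniv
  rw [hfiber, huniv]
  ring

lemma natCast_zmod_inj {q m n : ℕ} (hm : m < q) (hn : n < q) : (m : ZMod q) = n ↔ m = n := by
  rw [ZMod.natCast_eq_natCast_iff', Nat.mod_eq_of_lt hm, Nat.mod_eq_of_lt hn]

lemma card_filter_val_lt {p q : ℕ} [NeZero q] (hpq : p ≤ q) :
    (Finset.univ.filter fun z : ZMod q => z.val < p).card = p := by
  have himage : (Finset.univ.filter fun z : ZMod q => z.val < p).image ZMod.val =
      Finset.range p := by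
    ext n
    simp only [Finset.mem_image, Finset.mem_filter, Finset.mem_univ, true_and, Finset.mem_range]
    refine ⟨?_, fun hn => ⟨n, ?_⟩⟩
    · rintro ⟨z, hz, rfl⟩
      exact hz
    · rw [ZMod.val_natCast_of_lt (hn.trans_le hpq)]
      exact ⟨hn, rfl⟩
  rw [← Finset.card_image_of_injective _ (ZMod.val_injective q), himage, Finset.card_range]

end Counting

/-! ### The band of occupied sites -/

section Band

variable {u v : ℤ × ℤ} {p q : ℕ} {φ : (ℤ × ℤ) ⧸ lat u v →+ ZMod q}

/-- The sites of the torus whose phase `φ` has its representative in `[0, p)`: the occupied sites of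
the basis state that projects to a ground state. -/
abbrev Band (φ : (ℤ × ℤ) ⧸ lat u v →+ ZMod q) (p : ℕ) : Type :=
  {a : (ℤ × ℤ) ⧸ lat u v // (φ a).val < p}

/-- The vertical edge of the torus above a site of the band, with the band site as the endpoint
`false`. -/
def bandEdge (a : Band φ p) (s : Bool) : (ℤ × ℤ) ⧸ lat u v :=
  a + if s then ((0, 1) : ℤ × ℤ) else (0 : ℤ × ℤ)

lemma phase_bandEdge [NeZero q] (hφ₂ : φ ((0, 1) : ℤ × ℤ) = p) (a : Band φ p) (s : Bool) :
    φ (bandEdge a s) = ((φ a).val + s.toNat * p : ℕ) := by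
  cases s <;> simp [bandEdge, hφ₂]

lemma val_add_toNat_mul_lt (a : Band φ p) (s : Bool) : (φ a).val + s.toNat * p < 2 * p := by
  have ha := a.2
  cases s
  · simp only [Bool.toNat_false]; lia
  · simp only [Bool.toNat_true]; lia

lemma val_add_eq_of_bandEdge_sub_eq [NeZero q] (hφ₂ : φ ((0, 1) : ℤ × ℤ) = p) (hpq : 4 * p ≤ q)
    {a b : Band φ p} {s t : Bool} {x : (ℤ × ℤ) ⧸ lat u v} {k : ℕ} (hx : φ x = k)
    (hk : k ≤ 2 * p) (h : bandEdge a s - bandEdge b t = x) :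
    (φ a).val + s.toNat * p = k + ((φ b).val + t.toNat * p) := by
  have hs := val_add_toNat_mul_lt a s
  have ht := val_add_toNat_mul_lt b t
  have hphase := congrArg φ h
  rw [map_sub, hx, phase_bandEdge hφ₂, phase_bandEdge hφ₂, sub_eq_iff_eq_add, ← Nat.cast_add]
    at hphase
  exact (natCast_zmod_inj (by lia) (by lia)).1 hphase

lemma bandEdge_sub_ne [NeZero q] (hφ₁ : φ ((1, 0) : ℤ × ℤ) = 2 * p)
    (hφ₂ : φ ((0, 1) : ℤ × ℤ) = p) (hpq : 4 * p ≤ q) (a b : Band φ p) (s t : Bool) :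
    bandEdge a s - bandEdge b t ≠ ((1, 0) : ℤ × ℤ) := by
  intro h
  have hphase := val_add_eq_of_bandEdge_sub_eq hφ₂ hpq (by exact_mod_cast hφ₁) le_rfl h
  have hs := val_add_toNat_mul_lt a s
  lia

lemma bandEdge_sub_eq_iff [NeZero q] (hφ₂ : φ ((0, 1) : ℤ × ℤ) = p) (hpq : 4 * p ≤ q)
    (a b : Band φ p) (s t : Bool) :
    bandEdge a s - bandEdge b t = ((0, 1) : ℤ × ℤ) ↔ a = b ∧ s = true ∧ t = false := by
  constructor
  · intro h
    have hphase := val_add_eq_of_bandEdge_sub_eq hφ₂ hpq hφ₂ (by lia) h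
    have hs : s = true := by
      have ha := a.2
      cases s
      · simp only [Bool.toNat_false] at hphase; lia
      · rfl
    have ht : t = false := by
      have ha := val_add_toNat_mul_lt a s
      cases t
      · rfl
      · simp only [Bool.toNat_true] at hphase; lia
    subst hs ht
    have hab : a.1 = b.1 := by simpa [bandEdge, sub_eq_iff_eq_add, add_comm] using h
    exact ⟨Subtype.ext hab, rfl, rfl⟩
  · rintro ⟨rfl, rfl, rfl⟩
    simp [bandEdge]

lemma isInducedMatching_bandEdge (hφ₁ : φ ((1, 0) : ℤ × ℤ) = 2 * p)
    (hφ₂ : φ ((0, 1) : ℤ × ℤ) = p) (hp : 0 < p) (hpq : 4 * p ≤ q) :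
    IsInducedMatching (torusGraph u v) (bandEdge : Band φ p → Bool → _) := by
  have : NeZero q := ⟨by lia⟩
  intro a b s t
  have hne : ((0, 1) : ℤ × ℤ) ≠ (0 : (ℤ × ℤ) ⧸ lat u v) := by
    intro h
    have hp0 : (p : ZMod q) = (0 : ℕ) := by rw [← hφ₂, h, map_zero, Nat.cast_zero]
    exact hp.ne' ((natCast_zmod_inj (by lia) (by lia)).1 hp0)
  simp only [torusGraph, bandEdge_sub_ne hφ₁ hφ₂ hpq, bandEdge_sub_eq_iff hφ₂ hpq, false_or]
  constructor
  · rintro ⟨-, ⟨rfl, rfl, rfl⟩ | ⟨rfl, rfl, rfl⟩⟩ <;> simp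
  · rintro ⟨rfl, hst⟩
    cases s <;> cases t <;> simp_all [bandEdge]

lemma mem_band_or_exists_adj [NeZero q] (hφ₁ : φ ((1, 0) : ℤ × ℤ) = 2 * p)
    (hφ₂ : φ ((0, 1) : ℤ × ℤ) = p) (hqp : q ≤ 5 * p) (a : (ℤ × ℤ) ⧸ lat u v) :
    (φ a).val < p ∨ ∃ b : Band φ p, (torusGraph u v).Adj a b := by
  refine or_iff_not_imp_left.2 fun ha => ?_
  have hval_lt := ZMod.val_lt (φ a)
  have of_adj {b : (ℤ × ℤ) ⧸ lat u v} (n : ℕ) (hn : n < p) (hb : φ b = n)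
      (hab : a - b = ((1, 0) : ℤ × ℤ) ∨ b - a = ((1, 0) : ℤ × ℤ) ∨
        a - b = ((0, 1) : ℤ × ℤ) ∨ b - a = ((0, 1) : ℤ × ℤ)) :
      ∃ b : Band φ p, (torusGraph u v).Adj a b := by
    have hbp : (φ b).val < p := by
      rw [hb, ZMod.val_natCast]
      exact (Nat.mod_le n q).trans_lt hn
    exact ⟨⟨b, hbp⟩, fun h => ha (h ▸ hbp), hab⟩
  obtain ⟨y, hy⟩ : ∃ y, (φ a).val = y := ⟨_, rfl⟩
  have hphase : φ a = y := by rw [← hy, ZMod.natCast_zmod_val]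
  rw [hy] at ha hval_lt
  -- For the phases in `[p, 2p)`, `[2p, 3p)`, `[q - p, q)` and `[3p, q - p)`, the band is reached by
  -- a step down, left, up and right, respectively.
  by_cases h2 : y < 2 * p
  · exact of_adj (b := a - ((0, 1) : ℤ × ℤ)) (y - p) (by lia)
      (by rw [map_sub, hφ₂, hphase, Nat.cast_sub (by lia)]) (by simp)
  by_cases h3 : y < 3 * p
  · exact of_adj (b := a - ((1, 0) : ℤ × ℤ)) (y - 2 * p) (by lia)
      (by rw [map_sub, hφ₁, hphase, Nat.cast_sub (by lia)]; simp) (by simp)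
  by_cases h4 : q ≤ y + p
  · exact of_adj (b := a + ((0, 1) : ℤ × ℤ)) (y + p - q) (by lia)
      (by rw [map_add, hφ₂, hphase, Nat.cast_sub (by lia)]; simp) (by simp)
  · exact of_adj (b := a + ((1, 0) : ℤ × ℤ)) (y + 2 * p - q) (by lia)
      (by rw [map_add, hφ₁, hphase, Nat.cast_sub (by lia)]; simp) (by simp)

lemma phase_surjective [NeZero q] (hφ₂ : φ ((0, 1) : ℤ × ℤ) = p) (hpq : p.Coprime q) :
    Function.Surjective φ := by
  intro z
  obtain ⟨w, hw⟩ := (ZMod.isUnit_iff_coprime p q).2 hpq |>.exists_left_inv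
  refine ⟨(z * w).val • (((0, 1) : ℤ × ℤ) : (ℤ × ℤ) ⧸ lat u v), ?_⟩
  rw [map_nsmul, hφ₂, nsmul_eq_mul, ZMod.natCast_zmod_val, mul_assoc, hw, mul_one]

lemma card_band_mul [NeZero q] [Fintype ((ℤ × ℤ) ⧸ lat u v)] (hφ₂ : φ ((0, 1) : ℤ × ℤ) = p)
    (hpq : p.Coprime q) (hle : p ≤ q) :
    Fintype.card (Band φ p) * q = p * Fintype.card ((ℤ × ℤ) ⧸ lat u v) := by
  have hcard := card_filter_mem_mul_card (phase_surjective hφ₂ hpq)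
    (Finset.univ.filter fun z : ZMod q => z.val < p)
  rw [card_filter_val_lt hle, ZMod.card] at hcard
  rw [← hcard, Fintype.card_subtype]
  simp

lemma exists_phase (p : ℕ) (hu : (q : ℤ) ∣ 2 * u.1 + u.2) (hv : (q : ℤ) ∣ 2 * v.1 + v.2) :
    ∃ φ : (ℤ × ℤ) ⧸ lat u v →+ ZMod q,
      φ ((1, 0) : ℤ × ℤ) = 2 * p ∧ φ ((0, 1) : ℤ × ℤ) = p := by
  let f : ℤ × ℤ →+ ZMod q := AddMonoidHom.mk' (fun w => p * ((2 * w.1 + w.2 : ℤ) : ZMod q))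
    fun a b => by push_cast [Prod.fst_add, Prod.snd_add]; ring
  have hker {w : ℤ × ℤ} (hw : (q : ℤ) ∣ 2 * w.1 + w.2) : w ∈ f.ker := by
    change p * ((2 * w.1 + w.2 : ℤ) : ZMod q) = 0
    rw [(ZMod.intCast_zmod_eq_zero_iff_dvd _ _).2 hw, mul_zero]
  have hlat : lat u v ≤ f.ker := by
    rw [lat, AddSubgroup.closure_le]
    rintro w (rfl | rfl)
    exacts [hker hu, hker hv]
  refine ⟨QuotientAddGroup.lift (lat u v) f hlat, ?_, ?_⟩
  · simp [f, mul_comm]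
  · simp [f]

lemma pos_of_coprime_of_le {k : ℕ} (hpq : p.Coprime q) (hle : q ≤ k * p) : 0 < p := by
  refine Nat.pos_of_ne_zero ?_
  rintro rfl
  simp_all

theorem hasGroundStateAtFilling_of_dvd (hpq : p.Coprime q) (h4 : 4 * p ≤ q) (h5 : q ≤ 5 * p)
    (hdet : u.1 * v.2 - u.2 * v.1 ≠ 0) (hu : (q : ℤ) ∣ 2 * u.1 + u.2)
    (hv : (q : ℤ) ∣ 2 * v.1 + v.2) (fin : Fintype ((ℤ × ℤ) ⧸ lat u v))
    (lo : LinearOrder ((ℤ × ℤ) ⧸ lat u v)) :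
    HasGroundStateAtFilling u v fin lo (p / q) := by
  have hp := pos_of_coprime_of_le hpq h5
  have : NeZero q := ⟨by lia⟩
  obtain ⟨φ, hφ₁, hφ₂⟩ := exists_phase p hu hv
  have he := isInducedMatching_bandEdge hφ₁ hφ₂ hp h4
  have hmax : Maximal (Indep (torusGraph u v)) (he.facet fun _ => false).1 := by
    have hmem (a : Band φ p) : a.1 ∈ (he.facet fun _ => false).1 :=
      Finset.mem_image.2 ⟨a, Finset.mem_univ a, by simp [bandEdge]⟩
    refine maximal_indep_of_forall_exists_adj (he.facet _).2 fun a => ?_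
    exact (mem_band_or_exists_adj hφ₁ hφ₂ h5 a).imp (fun ha => hmem ⟨a, ha⟩)
      fun ⟨b, hb⟩ => ⟨b, hmem b, hb⟩
  obtain ⟨ψ, hψ, hker, hnum⟩ := he.exists_ground_state_of_maximal_facet hmax
  refine ⟨ψ, hψ, hker, _, hnum, ?_⟩
  rw [← natCard_quotient_lat hdet, Nat.card_eq_fintype_card,
    div_eq_div_iff (by simp) (by simp [NeZero.ne q])]
  exact_mod_cast card_band_mul hφ₂ hpq (by lia)

end Band

lemma sq_le_of_mem_lat_square {q : ℤ} {w : ℤ × ℤ} (hw : w ∈ lat (q, 0) (0, q)) (hw0 : w ≠ 0) :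
    q ^ 2 ≤ w.1 ^ 2 + w.2 ^ 2 := by
  obtain ⟨m, n, rfl⟩ := AddSubgroup.mem_closure_pair.1 hw
  have hmn : 1 ≤ m ^ 2 + n ^ 2 := by
    by_contra! h
    have hm : m = 0 := by nlinarith
    have hn : n = 0 := by nlinarith
    simp [hm, hn] at hw0
  simp only [Prod.smul_mk, smul_eq_mul, mul_zero, Prod.mk_add_mk, add_zero, zero_add]
  nlinarith [sq_nonneg q]

lemma exists_coprime_div_eq {ρ : ℚ} (h₁ : 1 / 5 ≤ ρ) (h₂ : ρ ≤ 1 / 4) :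
    ∃ p q : ℕ, p.Coprime q ∧ 4 * p ≤ q ∧ q ≤ 5 * p ∧ ρ = p / q := by
  have hnum : (ρ.num.natAbs : ℤ) = ρ.num :=
    Int.natAbs_of_nonneg (Rat.num_nonneg.2 (le_trans (by norm_num) h₁))
  have hρ : ρ = ρ.num.natAbs / ρ.den := by
    rw [← Int.cast_natCast, hnum, Rat.num_div_den]
  have hden : (0 : ℚ) < ρ.den := by exact_mod_cast ρ.den_pos
  refine ⟨ρ.num.natAbs, ρ.den, ρ.reduced, ?_, ?_, hρ⟩
  · rw [hρ, div_le_div_iff₀ hden (by norm_num)] at h₂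
    exact_mod_cast (by linarith : (4 * ρ.num.natAbs : ℚ) ≤ ρ.den)
  · rw [hρ, div_le_div_iff₀ (by norm_num) hden] at h₁
    exact_mod_cast (by linarith : (ρ.den : ℚ) ≤ 5 * ρ.num.natAbs)

/-- Zero-energy ground states of the torus square-lattice model exist at
every rational filling `ρ` with `1/5 ≤ ρ ≤ 1/4`. -/
theorem ground_states_at_all_fillings (ρ : ℚ) (h₁ : 1 / 5 ≤ ρ) (h₂ : ρ ≤ 1 / 4) :
    ∃ u v : ℤ × ℤ, u.1 * v.2 - u.2 * v.1 ≠ 0 ∧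
      (∀ w ∈ lat u v, w ≠ 0 → 9 ≤ w.1 ^ 2 + w.2 ^ 2) ∧
      ∃ (fin : Fintype ((ℤ × ℤ) ⧸ lat u v)) (lo : LinearOrder ((ℤ × ℤ) ⧸ lat u v)),
        HasGroundStateAtFilling u v fin lo ρ := by
  obtain ⟨p, q, hpq, h4, h5, rfl⟩ := exists_coprime_div_eq h₁ h₂
  have hp := pos_of_coprime_of_le hpq h5
  have hdet : (q : ℤ) * q - 0 * 0 ≠ 0 := by simpa using (by lia : q ≠ 0)
  have := finite_quotient_lat (u := (q, 0)) (v := (0, q)) hdet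
  obtain ⟨lo, -⟩ := exists_wellFoundedLT ((ℤ × ℤ) ⧸ lat (q, 0) (0, q))
  refine ⟨(q, 0), (0, q), hdet, fun w hw hw0 => ?_, Fintype.ofFinite _, lo, ?_⟩
  · have hqw := sq_le_of_mem_lat_square hw hw0
    have hq : (4 : ℤ) ≤ q := by lia
    nlinarith [hq, hqw]
  · exact hasGroundStateAtFilling_of_dvd hpq h4 h5 hdet (by simp) (by simp) _ lo
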